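/- arXiv:1610.07789 — 2 statements merged into one kernel-verified Lean document; each statement's English description precedes it below -/
import Mathlib

section
/- Let 0 ≤ ε ≤ 1/2 and let N be an odd positive integer. Then the majority-decoding error probability satisfies ∑_{j=(N+1)/2}^{N} C(N,j)·ε^j·(1−ε)^{N−j} ≤ ε; that is, majority voting over N independent binary symmetric sub-channels with crossover probability ε never has larger error probability than a single sub-channel. -/
/-- Above the middle index, a binomial weight with success probability `ε ≤ 1/2` is dominated,
up to the odds `ε / (1 - ε)`, by the weight of the complementary index. -/
theorem one_sub_mul_binomial_weight_le {ε : ℝ} (h0 : 0 ≤ ε) (h1 : ε ≤ 1 / 2) {N j : ℕ}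
    (hjN : j ≤ N) (hj : N < 2 * j) :
    (1 - ε) * ((N.choose j : ℝ) * ε ^ j * (1 - ε) ^ (N - j)) ≤
      ε * ((N.choose (N - j) : ℝ) * ε ^ (N - j) * (1 - ε) ^ j) := by
  obtain ⟨d, hd⟩ : ∃ d, j = N - j + 1 + d := ⟨j - (N - j + 1), by omega⟩
  rw [Nat.choose_symm hjN]
  generalize N - j = k at hd
  have hpow : ε ^ d ≤ (1 - ε) ^ d := pow_le_pow_left₀ h0 (by linarith) d
  have hq : 0 ≤ 1 - ε := by linarith
  have hfactor : 0 ≤ (N.choose j : ℝ) * ε ^ (k + 1) * (1 - ε) ^ (k + 1) := by positivity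
  generalize (N.choose j : ℝ) = c at *
  subst hd
  calc (1 - ε) * (c * ε ^ (k + 1 + d) * (1 - ε) ^ k)
      = c * ε ^ (k + 1) * (1 - ε) ^ (k + 1) * ε ^ d := by ring
    _ ≤ c * ε ^ (k + 1) * (1 - ε) ^ (k + 1) * (1 - ε) ^ d :=
        mul_le_mul_of_nonneg_left hpow hfactor
    _ = ε * (c * ε ^ k * (1 - ε) ^ (k + 1 + d)) := by ring

/-- The binomial weights with an odd number of trials, grouped into complementary pairs,
sum to one. -/
theorem sum_binomial_weight_complementary_pairs (ε : ℝ) (m : ℕ) :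
    ∑ j ∈ Finset.Icc (m + 1) (2 * m + 1),
      (((2 * m + 1).choose j : ℝ) * ε ^ j * (1 - ε) ^ (2 * m + 1 - j) +
        ((2 * m + 1).choose (2 * m + 1 - j) : ℝ) * ε ^ (2 * m + 1 - j) * (1 - ε) ^ j) = 1 := by
  have hreflect : ∑ j ∈ Finset.Icc (m + 1) (2 * m + 1),
        ((2 * m + 1).choose (2 * m + 1 - j) : ℝ) * ε ^ (2 * m + 1 - j) * (1 - ε) ^ j =
      ∑ j ∈ Finset.range (m + 1),
        ((2 * m + 1).choose j : ℝ) * ε ^ j * (1 - ε) ^ (2 * m + 1 - j) := by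
    refine Finset.sum_nbij' (fun j => 2 * m + 1 - j) (fun j => 2 * m + 1 - j) ?_ ?_ ?_ ?_ ?_
    · intro j hj; simp only [Finset.mem_Icc, Finset.mem_range] at *; omega
    · intro j hj; simp only [Finset.mem_Icc, Finset.mem_range] at *; omega
    · intro j hj; simp only [Finset.mem_Icc] at *; omega
    · intro j hj; simp only [Finset.mem_range] at *; omega
    · intro j hj
      rw [Nat.sub_sub_self (Finset.mem_Icc.1 hj).2]
  rw [Finset.sum_add_distrib, hreflect, ← Finset.Ico_add_one_right_eq_Icc, add_comm,
    Finset.sum_range_add_sum_Ico _ (by omega)]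
  have hbinom := add_pow ε (1 - ε) (2 * m + 1)
  rw [add_sub_cancel, one_pow] at hbinom
  refine Eq.trans (Finset.sum_congr rfl fun j _ => ?_) hbinom.symm
  ring

/-- For `0 ≤ ε ≤ 1/2` and odd `N`, majority voting over `N` independent binary symmetric
sub-channels with crossover probability `ε` never has larger error probability than a
single sub-channel: `∑_{j=(N+1)/2}^{N} C(N,j) ε^j (1−ε)^{N−j} ≤ ε`. -/
theorem majority_error_le_crossover (ε : ℝ) (h0 : 0 ≤ ε) (h1 : ε ≤ 1 / 2)
    (N : ℕ) (hodd : Odd N) (hpos : 0 < N) :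
    ∑ j ∈ Finset.Icc ((N + 1) / 2) N, (N.choose j : ℝ) * ε ^ j * (1 - ε) ^ (N - j) ≤ ε := by
  obtain ⟨m, rfl⟩ := hodd
  rw [show (2 * m + 1 + 1) / 2 = m + 1 by omega]
  calc _ ≤ ∑ j ∈ Finset.Icc (m + 1) (2 * m + 1), ε *
        (((2 * m + 1).choose j : ℝ) * ε ^ j * (1 - ε) ^ (2 * m + 1 - j) +
          ((2 * m + 1).choose (2 * m + 1 - j) : ℝ) * ε ^ (2 * m + 1 - j) * (1 - ε) ^ j) := by
        refine Finset.sum_le_sum fun j hj => ?_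
        rw [Finset.mem_Icc] at hj
        linarith [one_sub_mul_binomial_weight_le h0 h1 hj.2 (by omega)]
    _ = ε := by
        rw [← Finset.mul_sum, sum_binomial_weight_complementary_pairs, mul_one]
end

section
/- (Channel linearization) Let p be a prime and κ > 0 a real number. Define the coarse-lattice quantizer Q_c(t) = κ·round(t/κ) for t ∈ ℝ (round denoting nearest-integer rounding), the modulo-Λ_s reduction [t] = t − κp·round(t/(κp)), the lattice modulation φ : Z_p → ℝ by φ(u) = [κ·g(u)] where g(u) ∈ {0,…,p−1} is the canonical integer representative of u, and the demodulation ψ : ℝ → Z_p by ψ(v) = (round(v/κ) mod p). Then for any L ≥ 1, any integers A_1,…,A_L ∈ ℤ, any symbols c_1,…,c_L ∈ Z_p, and any real number w, the quantize–demodulate chain is linear over Z_p: ψ( [ Q_c( ∑_{ℓ=1}^{L} A_ℓ·φ(c_ℓ) + w ) ] ) = ∑_{ℓ=1}^{L} (A_ℓ mod p)·c_ℓ + ψ( [ Q_c(w) ] ), where the right-hand sum and products are taken in Z_p. -/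
/-- Coarse-lattice quantizer `Q_c(t) = κ·round(t/κ)` onto `Λ_c = κℤ`. -/
noncomputable def coarseQuant (κ t : ℝ) : ℝ := κ * round (t / κ)

/-- Modulo-`Λ_s` reduction `[t] = t − κp·round(t/(κp))`, where `Λ_s = κpℤ`. -/
noncomputable def modShape (p : ℕ) (κ t : ℝ) : ℝ := t - κ * p * round (t / (κ * p))

/-- Lattice modulation `φ(u) = [κ·g(u)] mod Λ_s`, where `g(u) ∈ {0,…,p−1}` is the
canonical integer representative of `u ∈ Z_p`. -/
noncomputable def latticeMod (p : ℕ) (κ : ℝ) (u : ZMod p) : ℝ :=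
  modShape p κ (κ * (ZMod.val u : ℝ))

/-- Lattice demodulation `ψ(v) = round(v/κ) mod p ∈ Z_p`. -/
noncomputable def latticeDemod (p : ℕ) (κ : ℝ) (v : ℝ) : ZMod p :=
  ((round (v / κ) : ℤ) : ZMod p)

/-- Modulo-`Λ_s` reduction does not change the demodulated symbol. -/
theorem latticeDemod_modShape (p : ℕ) {κ : ℝ} (hκ : κ ≠ 0) (t : ℝ) :
    latticeDemod p κ (modShape p κ t) = latticeDemod p κ t := by
  have h : modShape p κ t / κ = t / κ - ((p * round (t / (κ * p)) : ℤ) : ℝ) := by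
    unfold modShape
    push_cast
    field_simp
  rw [latticeDemod, h, round_sub_intCast]
  simp [latticeDemod]

/-- Coarse quantization does not change the demodulated symbol. -/
theorem latticeDemod_coarseQuant (p : ℕ) {κ : ℝ} (hκ : κ ≠ 0) (t : ℝ) :
    latticeDemod p κ (coarseQuant κ t) = latticeDemod p κ t := by
  simp [latticeDemod, coarseQuant, hκ]

/-- Translating by a point of the coarse lattice translates the demodulated symbol. -/
theorem latticeDemod_mul_intCast_add (p : ℕ) {κ : ℝ} (hκ : κ ≠ 0) (n : ℤ) (t : ℝ) :
    latticeDemod p κ (κ * n + t) = n + latticeDemod p κ t := by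
  simp [latticeDemod, add_div, hκ]

/-- The modulated symbol is a coarse-lattice point whose index reduces to the symbol mod `p`. -/
theorem exists_latticeMod_eq (p : ℕ) [NeZero p] (κ : ℝ) (u : ZMod p) :
    ∃ n : ℤ, latticeMod p κ u = κ * n ∧ (n : ZMod p) = u := by
  refine ⟨u.val - p * round (κ * (u.val : ℝ) / (κ * p)), ?_, by simp⟩
  unfold latticeMod modShape
  push_cast
  ring

/-- Channel linearization: the quantize–demodulate chain of the sawtooth ADC is linear
over `Z_p`: `ψ([Q_c(∑ ℓ, A_ℓ·φ(c_ℓ) + w)]) = ∑ ℓ, (A_ℓ mod p)·c_ℓ + ψ([Q_c(w)])`. -/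
theorem sawtooth_ADC_linearization
    (p : ℕ) [Fact p.Prime] (κ : ℝ) (hκ : 0 < κ) (L : ℕ)
    (A : Fin L → ℤ) (c : Fin L → ZMod p) (w : ℝ) :
    latticeDemod p κ
        (modShape p κ (coarseQuant κ (∑ ℓ, (A ℓ : ℝ) * latticeMod p κ (c ℓ) + w)))
      = ∑ ℓ, (A ℓ : ZMod p) * c ℓ
          + latticeDemod p κ (modShape p κ (coarseQuant κ w)) := by
  choose n hn hnc using fun ℓ => exists_latticeMod_eq p κ (c ℓ)
  have hsum : ∑ ℓ, (A ℓ : ℝ) * latticeMod p κ (c ℓ) = κ * ((∑ ℓ, A ℓ * n ℓ : ℤ) : ℝ) := by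
    push_cast
    rw [Finset.mul_sum]
    refine Finset.sum_congr rfl fun ℓ _ => ?_
    rw [hn]
    ring
  simp only [latticeDemod_modShape p hκ.ne', latticeDemod_coarseQuant p hκ.ne']
  rw [hsum, latticeDemod_mul_intCast_add p hκ.ne']
  simp [hnc]
end
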